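/- Let R > 0, let x, y, z, w ∈ X, and fix a geodesic segment [y,z] from y to z which is C-contracting for some C > 0. If the triple (x, [y,z], w) is R-aligned and d(y,z) > 2R + C, then w ∈ O_{R+2C}(x,y) ∩ O_{R+2C}(y,z). -/

import Mathlib

/-!
The argument concerns the first point `p` at which a geodesic issuing from `a` comes within
distance `C` of the contracting segment `S`. The part of the geodesic before `p` stays at
distance at least `C` from `S`, so contraction puts the projections of `a` and of `p` within `C`
of each other; as the projections of `a` are `R`-close to the endpoint `e`, the point `p` is
`(R + 2C)`-close to `e` (`exists_dist_lt_of_infDist_le`).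

For the first shadow this is applied to a geodesic from `x` to `w`, which must come `C`-close to
`S`: otherwise the projections of `x` and `w`, which are more than `C` apart because
`d(y,z) > 2R + C`, would contradict contraction. For the second shadow it is applied to a geodesic
from `w` to `y`, which comes `C`-close to `S` because it ends at `y ∈ S`.
-/

open Metric Set

/-- The nearest-point projection of a point `x` to a subset `A`. -/
def nearestProj {X : Type*} [MetricSpace X] (A : Set X) (x : X) : Set X :=
  {a ∈ A | dist x a = Metric.infDist x A}

/-- `f` restricted to `s ⊆ ℝ` is a unit-speed geodesic. -/
def IsGeodesicOn {X : Type*} [MetricSpace X] (f : ℝ → X) (s : Set ℝ) : Prop :=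
  ∀ u ∈ s, ∀ v ∈ s, dist (f u) (f v) = |u - v|

/-- `S` is (the image of) a geodesic segment from `x` to `y`. -/
def IsGeodSegment {X : Type*} [MetricSpace X] (S : Set X) (x y : X) : Prop :=
  ∃ (f : ℝ → X) (L : ℝ), 0 ≤ L ∧ IsGeodesicOn f (Set.Icc 0 L) ∧
    f 0 = x ∧ f L = y ∧ S = f '' Set.Icc 0 L

/-- `X` is a geodesic metric space: any two points are joined by a geodesic segment. -/
def GeodesicSpace (X : Type*) [MetricSpace X] : Prop :=
  ∀ x y : X, ∃ S : Set X, IsGeodSegment S x y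

/-- `A` is a `C`-contracting subset: any geodesic segment at distance at least `C`
from `A` has nearest-point projection to `A` of diameter at most `C`. -/
def Contracting {X : Type*} [MetricSpace X] (C : ℝ) (A : Set X) : Prop :=
  ∀ (S : Set X) (x y : X), IsGeodSegment S x y →
    (∀ p ∈ S, C ≤ Metric.infDist p A) →
    Metric.diam {a : X | ∃ p ∈ S, a ∈ nearestProj A p} ≤ C

/-- The point `w` is `K`-aligned with the geodesic `S` relative to the marked
endpoint `e` of `S`: the diameter of `π_S(w) ∪ {e}` is less than `K`.
For a segment `S` from `x` to `y`, the pair `(w, S)` being `K`-aligned is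
`AlignedIn K w S x`, and the pair `(S, z)` being `K`-aligned is `AlignedIn K z S y`. -/
def AlignedIn {X : Type*} [MetricSpace X] (K : ℝ) (w : X) (S : Set X) (e : X) : Prop :=
  Metric.diam (nearestProj S w ∪ {e}) < K

/-- The shadow `O_R(x,y)`: points `w` such that some geodesic segment from `x` to `w`
meets the open ball of radius `R` about `y`. -/
def Shadow {X : Type*} [MetricSpace X] (R : ℝ) (x y : X) : Set X :=
  {w | ∃ S : Set X, IsGeodSegment S x w ∧ ∃ p ∈ S, dist p y < R}

/-- The Gromov product `(z|w)_x`. -/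
noncomputable def gromovProd {X : Type*} [MetricSpace X] (x z w : X) : ℝ :=
  (dist x z + dist x w - dist z w) / 2

/-- `X` has `δ`-thin geodesic triangles. -/
def ThinTriangles (X : Type*) [MetricSpace X] (δ : ℝ) : Prop :=
  ∀ (x y z : X) (S₁ S₂ S₃ : Set X),
    IsGeodSegment S₁ x y → IsGeodSegment S₂ y z → IsGeodSegment S₃ x z →
    ∀ p ∈ S₃, Metric.infDist p (S₁ ∪ S₂) ≤ δ

theorem IsGeodesicOn.continuousOn {X : Type*} [MetricSpace X] {f : ℝ → X} {s : Set ℝ}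
    (h : IsGeodesicOn f s) : ContinuousOn f s := by
  have : LipschitzOnWith 1 f s := LipschitzOnWith.of_dist_le_mul fun u hu v hv => by
    simp [h u hu v hv, Real.dist_eq]
  exact this.continuousOn

theorem IsGeodSegment.isCompact {X : Type*} [MetricSpace X] {S : Set X} {x y : X}
    (h : IsGeodSegment S x y) : IsCompact S := by
  obtain ⟨f, L, -, hf, -, -, rfl⟩ := h
  exact isCompact_Icc.image_of_continuousOn hf.continuousOn

theorem IsGeodSegment.left_mem {X : Type*} [MetricSpace X] {S : Set X} {x y : X}
    (h : IsGeodSegment S x y) : x ∈ S := by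
  obtain ⟨f, L, hL, -, rfl, -, rfl⟩ := h
  exact ⟨0, ⟨le_rfl, hL⟩, rfl⟩

theorem IsGeodSegment.symm {X : Type*} [MetricSpace X] {S : Set X} {x y : X}
    (h : IsGeodSegment S x y) : IsGeodSegment S y x := by
  obtain ⟨f, L, hL, hf, rfl, rfl, rfl⟩ := h
  refine ⟨fun t => f (L - t), L, hL, ?_, by simp, by simp, ?_⟩
  · intro u hu v hv
    have := hf (L - u) ⟨by linarith [hu.2], by linarith [hu.1]⟩
      (L - v) ⟨by linarith [hv.2], by linarith [hv.1]⟩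
    rw [this, show L - u - (L - v) = v - u by ring, abs_sub_comm]
  · ext p
    constructor
    · rintro ⟨t, ht, rfl⟩
      exact ⟨L - t, ⟨by linarith [ht.2], by linarith [ht.1]⟩, by simp⟩
    · rintro ⟨t, ht, rfl⟩
      exact ⟨L - t, ⟨by linarith [ht.2], by linarith [ht.1]⟩, rfl⟩

theorem nearestProj_nonempty {X : Type*} [MetricSpace X] {S : Set X} (hS : IsCompact S)
    (hne : S.Nonempty) (x : X) : ∃ a, a ∈ nearestProj S x := by
  obtain ⟨a, ha, h⟩ := hS.exists_infDist_eq_dist hne x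
  exact ⟨a, ha, h.symm⟩

theorem AlignedIn.dist_lt {X : Type*} [MetricSpace X] {S : Set X} (hS : IsCompact S)
    {K : ℝ} {w e a : X} (h : AlignedIn K w S e) (ha : a ∈ nearestProj S w) : dist a e < K := by
  have hb : Bornology.IsBounded (nearestProj S w ∪ {e}) :=
    (hS.isBounded.subset fun _ h => h.1).union Bornology.isBounded_singleton
  exact (Metric.dist_le_diam_of_mem hb (Or.inl ha) (Or.inr rfl)).trans_lt h

theorem Contracting.dist_le {X : Type*} [MetricSpace X] {S T : Set X} (hS : IsCompact S) {C : ℝ}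
    (h : Contracting C S) {a b p q p' q' : X} (hT : IsGeodSegment T a b)
    (hfar : ∀ p ∈ T, C ≤ Metric.infDist p S) (hp : p ∈ T) (hq : q ∈ T)
    (hp' : p' ∈ nearestProj S p) (hq' : q' ∈ nearestProj S q) : dist p' q' ≤ C := by
  have hb : Bornology.IsBounded {a : X | ∃ p ∈ T, a ∈ nearestProj S p} :=
    hS.isBounded.subset fun _ ⟨_, _, h⟩ => h.1
  exact (Metric.dist_le_diam_of_mem hb ⟨p, hp, hp'⟩ ⟨q, hq, hq'⟩).trans (h T a b hT hfar)

/-- A geodesic that starts at a point projecting `R`-close to `e` and comes within `C` of the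
`C`-contracting set `S` passes within `R + 2C` of `e`. -/
theorem exists_dist_lt_of_infDist_le {X : Type*} [MetricSpace X] {S T : Set X}
    (hS : IsCompact S) (hne : S.Nonempty) {C R : ℝ} (hC : 0 < C) (hcontr : Contracting C S)
    {a b e : X} (hT : IsGeodSegment T a b) (ha : AlignedIn R a S e)
    (hnear : ∃ p ∈ T, Metric.infDist p S ≤ C) : ∃ p ∈ T, dist p e < R + 2 * C := by
  obtain ⟨a', ha'⟩ := nearestProj_nonempty hS hne a
  have hae := ha.dist_lt hS ha'
  obtain ⟨f, L, hL, hf, rfl, rfl, rfl⟩ := hT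
  rcases lt_or_ge (Metric.infDist (f 0) S) C with h0 | h0
  · refine ⟨f 0, ⟨0, ⟨le_rfl, hL⟩, rfl⟩, ?_⟩
    linarith [dist_triangle (f 0) a' e, ha'.2]
  obtain ⟨_, ⟨t₀, ht₀, rfl⟩, hnear⟩ := hnear
  have hg : ContinuousOn (fun t => Metric.infDist (f t) S) (Icc 0 L) :=
    (Metric.continuous_infDist_pt S).comp_continuousOn hf.continuousOn
  -- By the intermediate value theorem, a time at distance at most `C` is preceded by a time at
  -- distance exactly `C`; below, `t₁` is the first such time.
  have ivt : ∀ t ∈ Icc 0 L, Metric.infDist (f t) S ≤ C →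
      ∃ s ∈ Icc 0 t, Metric.infDist (f s) S = C := fun t ht h =>
    intermediate_value_Icc' ht.1 (hg.mono (Icc_subset_Icc_right ht.2)) ⟨h, h0⟩
  have hcomp : IsCompact (Icc 0 L ∩ (fun t => Metric.infDist (f t) S) ⁻¹' {C}) :=
    isCompact_Icc.of_isClosed_subset (hg.preimage_isClosed_of_isClosed isClosed_Icc
      isClosed_singleton) inter_subset_left
  obtain ⟨s₀, hs₀, hs₀C⟩ := ivt t₀ ht₀ hnear
  obtain ⟨t₁, ⟨ht₁, ht₁C⟩, hleast⟩ :=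
    hcomp.exists_isLeast ⟨s₀, ⟨hs₀.1, hs₀.2.trans ht₀.2⟩, hs₀C⟩
  have ht₁C : Metric.infDist (f t₁) S = C := ht₁C
  have hsub : Icc 0 t₁ ⊆ Icc 0 L := Icc_subset_Icc_right ht₁.2
  have hseg : IsGeodSegment (f '' Icc 0 t₁) (f 0) (f t₁) :=
    ⟨f, t₁, ht₁.1, fun u hu v hv => hf u (hsub hu) v (hsub hv), rfl, rfl, rfl⟩
  have hfar : ∀ p ∈ f '' Icc 0 t₁, C ≤ Metric.infDist p S := by
    rintro _ ⟨t, ht, rfl⟩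
    by_contra! hlt
    obtain ⟨s, hs, hsC⟩ := ivt t (hsub ht) hlt.le
    have h₁ : t₁ ≤ s := hleast ⟨⟨hs.1, hs.2.trans (hsub ht).2⟩, hsC⟩
    have h₂ : s = t := le_antisymm hs.2 (ht.2.trans h₁)
    rw [h₂] at hsC
    exact hlt.ne hsC
  obtain ⟨q, hq⟩ := nearestProj_nonempty hS hne (f t₁)
  have hqa := hcontr.dist_le hS hseg hfar hseg.symm.left_mem hseg.left_mem hq ha'
  refine ⟨f t₁, ⟨t₁, ht₁, rfl⟩, ?_⟩
  linarith [dist_triangle (f t₁) q e, dist_triangle q a' e, hq.2]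

/-- alignment implies membership in two consecutive shadows. -/
theorem stmt4 {X : Type*} [MetricSpace X] [ProperSpace X]
    (hX : GeodesicSpace X)
    (R : ℝ) (hR : 0 < R) (x y z w : X)
    (S : Set X) (hS : IsGeodSegment S y z)
    (C : ℝ) (hC : 0 < C) (hcontr : Contracting C S)
    (hx : AlignedIn R x S y) (hwz : AlignedIn R w S z)
    (hlen : 2 * R + C < dist y z) :
    w ∈ Shadow (R + 2 * C) x y ∩ Shadow (R + 2 * C) y z := by
  have hne : S.Nonempty := ⟨y, hS.left_mem⟩
  constructor
  · obtain ⟨T, hT⟩ := hX x w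
    refine ⟨T, hT, exists_dist_lt_of_infDist_le hS.isCompact hne hC hcontr hT hx ?_⟩
    by_contra! hfar
    obtain ⟨x', hx'⟩ := nearestProj_nonempty hS.isCompact hne x
    obtain ⟨w', hw'⟩ := nearestProj_nonempty hS.isCompact hne w
    have h := hcontr.dist_le hS.isCompact hT (fun p hp => (hfar p hp).le)
      hT.left_mem hT.symm.left_mem hx' hw'
    have h₁ := hx.dist_lt hS.isCompact hx'
    have h₂ := hwz.dist_lt hS.isCompact hw'
    rw [dist_comm] at h₁
    linarith [dist_triangle4 y x' w' z]
  · obtain ⟨T, hT⟩ := hX y w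
    refine ⟨T, hT, exists_dist_lt_of_infDist_le hS.isCompact hne hC hcontr hT.symm hwz
      ⟨y, hT.left_mem, ?_⟩⟩
    rw [Metric.infDist_zero_of_mem hS.left_mem]
    exact hC.le
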